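/- arXiv:2301.06086 — 5 statements merged into one kernel-verified Lean document; each statement's English description precedes it below -/
import Mathlib

section
/- Let n and m be positive integers and u : ℕ × ℕ → ℝ be a function such that u(k,t) is nondecreasing in k and nonincreasing in t (on the domain where k + t ≤ m). For a vector k = (k_1,…,k_n) of nonnegative integers with k_1 + … + k_n = m, define its egalitarian value E(k) = min over i ∈ {1,…,n} of u(k_i, k_1 + … + k_{i-1}). Then there exists a vector k maximizing E over all such vectors which is non-decreasing, i.e., k_1 ≤ k_2 ≤ … ≤ k_n. -/
/-!
Sorting a vector into nondecreasing order never lowers its egalitarian value. Indeed, let `σ` sort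
`k`, fix a position `i`, and let `j` be the largest of the original positions `σ l`, `l ≤ i`, of the
`i`-th sorted entry and its predecessors. Then `k j` is at most the `i`-th sorted entry, and all the
other entries among these come before `j` in `k`, so the sum of the sorted entries before `i` is at
most the sum of the entries of `k` before `j`. Hence agent `i` after sorting picks at least as many
items, and no later, than agent `j` before. Sorting any of the maximizers, which exist because there
are finitely many vectors, gives a nondecreasing one.
-/

open Finset

section PartialSums

variable {ι M : Type*} [AddCommMonoid M] [Preorder M] [CanonicallyOrderedAdd M]

theorem add_sum_Iio_le_sum_univ [Fintype ι] [PartialOrder ι] [LocallyFiniteOrderBot ι]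
    (k : ι → M) (i : ι) :
    k i + ∑ j ∈ Iio i, k j ≤ ∑ j, k j := by
  rw [add_comm, sum_Iio_add_eq_sum_Iic]
  exact sum_le_sum_of_subset (subset_univ _)

theorem exists_le_and_sum_Iio_comp_le [LinearOrder ι] [LocallyFiniteOrderBot ι]
    [IsOrderedCancelAddMonoid M] {k : ι → M} {σ : Equiv.Perm ι} (hσ : Monotone (k ∘ σ)) (i : ι) :
    ∃ j, k j ≤ k (σ i) ∧ ∑ l ∈ Iio i, k (σ l) ≤ ∑ l ∈ Iio j, k l := by
  let A : Finset ι := (Iic i).map σ.toEmbedding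
  have hA : A.Nonempty := nonempty_Iic.map
  let j := A.max' hA
  have hjA : j ∈ A := A.max'_mem hA
  have hj : k j ≤ k (σ i) := by
    obtain ⟨l, hl, hlj⟩ := mem_map.mp hjA
    exact hlj ▸ hσ (mem_Iic.mp hl)
  have hbefore : A.erase j ⊆ Iio j := fun l hl => mem_Iio.mpr (A.lt_max'_of_mem_erase_max' hA hl)
  refine ⟨j, hj, le_of_add_le_add_right (a := k (σ i)) ?_⟩
  calc ∑ l ∈ Iio i, k (σ l) + k (σ i)
    _ = ∑ l ∈ Iic i, k (σ l) := sum_Iio_add_eq_sum_Iic i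
    _ = ∑ l ∈ A, k l := (sum_map _ σ.toEmbedding k).symm
    _ = ∑ l ∈ A.erase j, k l + k j := (sum_erase_add A k hjA).symm
    _ ≤ ∑ l ∈ Iio j, k l + k (σ i) := add_le_add (sum_le_sum_of_subset hbefore) hj

end PartialSums

/-- The egalitarian social welfare of the non-interleaving picking sequence in which the agents
`i : ι`, taken in increasing order, pick `k i` items each; `u a t` is the utility of picking `a`
items once `t` items are gone. -/
def egalitarianValue {ι M α : Type*} [Fintype ι] [Nonempty ι] [Preorder ι]
    [LocallyFiniteOrderBot ι] [AddCommMonoid M] [SemilatticeInf α]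
    (u : M → M → α) (k : ι → M) : α :=
  univ.inf' univ_nonempty fun i => u (k i) (∑ j ∈ Iio i, k j)

theorem egalitarianValue_comp_val {M α : Type*} [AddCommMonoid M] [SemilatticeInf α]
    {n : ℕ} [NeZero n] (u : M → M → α) (k : ℕ → M) :
    egalitarianValue u (fun i : Fin n => k i) =
      (range n).inf' (nonempty_range_iff.mpr (NeZero.ne n))
        fun i => u (k i) (∑ j ∈ range i, k j) := by
  have hsum (i : Fin n) : ∑ j ∈ Iio i, k j = ∑ j ∈ range i, k j := by
    rw [← Nat.Iio_eq_range, ← Fin.map_valEmbedding_Iio, sum_map]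
    rfl
  have hrange : range n = (univ : Finset (Fin n)).map Fin.valEmbedding := by
    rw [Fin.map_valEmbedding_univ, Nat.Iio_eq_range]
  simp only [egalitarianValue, hsum, hrange, inf'_map]
  rfl

theorem egalitarianValue_le_comp_perm {ι M α : Type*} [Fintype ι] [Nonempty ι] [LinearOrder ι]
    [LocallyFiniteOrderBot ι] [AddCommMonoid M] [Preorder M] [IsOrderedCancelAddMonoid M]
    [CanonicallyOrderedAdd M] [SemilatticeInf α] {u : M → M → α} {m : M}
    (humono : ∀ a a' t, a ≤ a' → a' + t ≤ m → u a t ≤ u a' t)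
    (htmono : ∀ a t t', t ≤ t' → a + t' ≤ m → u a t' ≤ u a t)
    {k : ι → M} (hk : ∑ i, k i ≤ m) {σ : Equiv.Perm ι} (hσ : Monotone (k ∘ σ)) :
    egalitarianValue u k ≤ egalitarianValue u (k ∘ σ) := by
  refine le_inf' _ _ fun i _ => ?_
  obtain ⟨j, hji, hsum⟩ := exists_le_and_sum_Iio_comp_le hσ i
  have hj : k j + ∑ l ∈ Iio j, k l ≤ m := (add_sum_Iio_le_sum_univ k j).trans hk
  have hi : k (σ i) + ∑ l ∈ Iio i, k (σ l) ≤ m :=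
    (add_sum_Iio_le_sum_univ (k ∘ σ) i).trans ((Equiv.sum_comp σ k).trans_le hk)
  calc egalitarianValue u k
    _ ≤ u (k j) (∑ l ∈ Iio j, k l) := inf'_le _ (mem_univ j)
    _ ≤ u (k j) (∑ l ∈ Iio i, k (σ l)) := htmono _ _ _ hsum hj
    _ ≤ u (k (σ i)) (∑ l ∈ Iio i, k (σ l)) := humono _ _ _ hji hi

section Optimum

variable {α : Type*} [LinearOrder α] {n : ℕ}

theorem exists_isMaxOn_sum_eq {ι M : Type*} [Fintype ι] [Nonempty ι] [AddCommMonoid M]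
    [HasAntidiagonal M] (m : M) (f : (ι → M) → α) :
    ∃ k, ∑ i, k i = m ∧ IsMaxOn f {k | ∑ i, k i = m} k := by
  classical
  have hmem (k : ι → M) : k ∈ piAntidiag univ m ↔ ∑ i, k i = m := by simp [mem_piAntidiag]
  obtain ⟨i⟩ := ‹Nonempty ι›
  obtain ⟨k, hk, hmax⟩ := exists_max_image (piAntidiag univ m) f
    ⟨Pi.single i m, (hmem _).mpr (Fintype.sum_pi_single' i m)⟩
  exact ⟨k, (hmem k).mp hk, fun k' hk' => hmax k' ((hmem k').mpr hk')⟩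

theorem exists_monotone_isMaxOn_egalitarianValue [NeZero n] {u : ℕ → ℕ → α} {m : ℕ}
    (humono : ∀ a a' t, a ≤ a' → a' + t ≤ m → u a t ≤ u a' t)
    (htmono : ∀ a t t', t ≤ t' → a + t' ≤ m → u a t' ≤ u a t) :
    ∃ k : Fin n → ℕ, ∑ i, k i = m ∧ Monotone k ∧
      IsMaxOn (egalitarianValue u) {k | ∑ i, k i = m} k := by
  obtain ⟨k, hk, hmax⟩ := exists_isMaxOn_sum_eq m (egalitarianValue u : (Fin n → ℕ) → α)
  have hsorted : Monotone (k ∘ Tuple.sort k) := Tuple.monotone_sort k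
  exact ⟨k ∘ Tuple.sort k, (Equiv.sum_comp (Tuple.sort k) k).trans hk, hsorted, fun k' hk' =>
    (hmax hk').trans (egalitarianValue_le_comp_perm humono htmono hk.le hsorted)⟩

theorem exists_nondecreasing_egalitarian_optimum_general {m : ℕ} (hn : 0 < n) {u : ℕ → ℕ → α}
    (humono : ∀ k k' t : ℕ, k ≤ k' → k' + t ≤ m → u k t ≤ u k' t)
    (htmono : ∀ k t t' : ℕ, t ≤ t' → k + t' ≤ m → u k t' ≤ u k t) :
    ∃ k : ℕ → ℕ, (∑ i ∈ range n, k i = m) ∧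
      (∀ i j : ℕ, i ≤ j → j < n → k i ≤ k j) ∧
      (∀ k' : ℕ → ℕ, (∑ i ∈ range n, k' i = m) →
        (range n).inf' (nonempty_range_iff.mpr hn.ne') (fun i => u (k' i) (∑ j ∈ range i, k' j)) ≤
          (range n).inf' (nonempty_range_iff.mpr hn.ne')
            (fun i => u (k i) (∑ j ∈ range i, k j))) := by
  have : NeZero n := ⟨hn.ne'⟩
  obtain ⟨k, hsum, hmono, hmax⟩ := exists_monotone_isMaxOn_egalitarianValue (n := n) humono htmono
  obtain ⟨k, rfl⟩ : ∃ f : ℕ → ℕ, k = fun i : Fin n => f i :=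
    ⟨Function.extend Fin.val k 0, funext fun i => (Fin.val_injective.extend_apply k 0 i).symm⟩
  refine ⟨k, (Fin.sum_univ_eq_sum_range k n).symm.trans hsum, fun i j hij hj => ?_,
    fun k' hk' => ?_⟩
  · exact hmono (show (⟨i, hij.trans_lt hj⟩ : Fin n) ≤ ⟨j, hj⟩ from hij)
  · rw [← egalitarianValue_comp_val u k', ← egalitarianValue_comp_val u k]
    exact hmax ((Fin.sum_univ_eq_sum_range k' n).trans hk')

end Optimum

/-- Let `u k t` be nondecreasing in `k` and nonincreasing in `t` (on the domain `k + t ≤ m`).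
For a vector `k = (k_1, …, k_n)` of nonnegative integers summing to `m`, its egalitarian value
is `E k = min_{i ∈ {1,…,n}} u (k_i) (k_1 + ⋯ + k_{i-1})`.  Then some vector maximizing `E`
over all such vectors is non-decreasing. -/
theorem exists_nondecreasing_egalitarian_optimum
    (n m : ℕ) (hn : 0 < n) (hm : 0 < m) (u : ℕ → ℕ → ℝ)
    (humono : ∀ k k' t : ℕ, k ≤ k' → k' + t ≤ m → u k t ≤ u k' t)
    (htmono : ∀ k t t' : ℕ, t ≤ t' → k + t' ≤ m → u k t' ≤ u k t) :
    ∃ k : ℕ → ℕ, (∑ i ∈ Finset.range n, k i = m) ∧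
      (∀ i j : ℕ, i ≤ j → j < n → k i ≤ k j) ∧
      (∀ k' : ℕ → ℕ, (∑ i ∈ Finset.range n, k' i = m) →
        (Finset.range n).inf' (Finset.nonempty_range_iff.mpr hn.ne')
            (fun i => u (k' i) (∑ j ∈ Finset.range i, k' j)) ≤
          (Finset.range n).inf' (Finset.nonempty_range_iff.mpr hn.ne')
            (fun i => u (k i) (∑ j ∈ Finset.range i, k j))) :=
  exists_nondecreasing_egalitarian_optimum_general hn humono htmono
end

section
/- Let n and m be positive integers and u : ℕ × ℕ → ℝ any function defined for k + t ≤ m. Define F(n, l) = u(m - l, l) for all l ∈ {0,…,m}, and for i from n-1 down to 1 define F(i, l) = max over k ∈ {0,…,m-l} of ( u(k, l) + F(i+1, l + k) ). Then F(1, 0) equals the maximum, over all vectors (k_1,…,k_n) of nonnegative integers with k_1 + … + k_n = m, of the sum over i ∈ {1,…,n} of u(k_i, k_1 + … + k_{i-1}). -/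
/-!
Bellman's principle: once the first agent has picked `k` items, the remaining agents face the same
problem with `k` more items gone. Since addition is monotone, maximizing first over the rest of the
sequence and then over `k` loses nothing; unrolling this from the last agent, who is forced to take
everything that is left, fills the table.
-/

/-- The utilitarian welfare of the non-interleaving picking sequence in which the agents
`0, …, n - 1` successively pick `k 0, …, k (n - 1)` items, when `t` items are gone at the start.
Agent `i` gains `u i k t` from picking `k` items after `t` are gone. -/
def pickingWelfare {M : Type*} [AddCommMonoid M] {n : ℕ} (u : Fin n → ℕ → ℕ → M) (t : ℕ)
    (k : Fin n → ℕ) : M :=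
  ∑ i, u i (k i) (t + ∑ j ∈ Finset.Iio i, k j)

/-- The welfares attainable by the picking sequences that exhaust the `m` items, `t` of which are
gone at the start. -/
def attainableWelfares {M : Type*} [AddCommMonoid M] {n : ℕ} (u : Fin n → ℕ → ℕ → M)
    (m t : ℕ) : Set M :=
  {x | ∃ k : Fin n → ℕ, t + ∑ i, k i = m ∧ x = pickingWelfare u t k}

theorem sum_Iio_fin_succ {M : Type*} [AddCommMonoid M] {n : ℕ} (f : Fin (n + 1) → M) (i : Fin n) :
    ∑ j ∈ Finset.Iio i.succ, f j = f 0 + ∑ j ∈ Finset.Iio i, f j.succ := by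
  have Iio_eq_Ico : Finset.Iio i.succ = Finset.Ico 0 i.succ := Finset.Ico_bot.symm
  rw [Iio_eq_Ico, ← Finset.add_sum_Ioo_eq_sum_Ico i.succ_pos, ← Fin.map_succEmb_Iio,
    Finset.sum_map]
  rfl

section AttainableWelfares

variable {M : Type*} [AddCommMonoid M] {n m t : ℕ}

theorem pickingWelfare_succ (u : Fin (n + 1) → ℕ → ℕ → M) (t : ℕ) (k : Fin (n + 1) → ℕ) :
    pickingWelfare u t k =
      u 0 (k 0) t + pickingWelfare (Fin.tail u) (t + k 0) (Fin.tail k) := by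
  have Iio_zero : Finset.Iio (0 : Fin (n + 1)) = ∅ := Finset.Iio_bot
  simp only [pickingWelfare, Fin.tail, Fin.sum_univ_succ, sum_Iio_fin_succ, Iio_zero,
    Finset.sum_empty, add_zero, add_assoc]

theorem attainableWelfares_one (u : Fin 1 → ℕ → ℕ → M) (ht : t ≤ m) :
    attainableWelfares u m t = {u 0 (m - t) t} := by
  have welfare_eq (k : Fin 1 → ℕ) : pickingWelfare u t k = u 0 (k 0) t := by
    rw [pickingWelfare_succ]
    simp [pickingWelfare]
  ext x
  simp only [attainableWelfares, Set.mem_ofPred_eq, Set.mem_singleton_iff, welfare_eq,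
    Fin.sum_univ_one]
  constructor
  · rintro ⟨k, hk, rfl⟩
    rw [← hk, Nat.add_sub_cancel_left]
  · rintro rfl
    exact ⟨fun _ => m - t, Nat.add_sub_cancel' ht, rfl⟩

theorem mem_attainableWelfares_succ (u : Fin (n + 1) → ℕ → ℕ → M) {x : M} :
    x ∈ attainableWelfares u m t ↔
      ∃ k ≤ m - t, ∃ y ∈ attainableWelfares (Fin.tail u) m (t + k), x = u 0 k t + y := by
  constructor
  · rintro ⟨k, hk, rfl⟩
    rw [Fin.sum_univ_succ, ← add_assoc] at hk
    exact ⟨k 0, by omega, _, ⟨Fin.tail k, hk, rfl⟩, pickingWelfare_succ u t k⟩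
  · rintro ⟨k₀, -, _, ⟨k, hk, rfl⟩, rfl⟩
    refine ⟨Fin.cons k₀ k, ?_, ?_⟩
    · rw [Fin.sum_cons, ← add_assoc, hk]
    · rw [pickingWelfare_succ, Fin.cons_zero, Fin.tail_cons]

variable [Preorder M] [AddLeftMono M]

theorem isGreatest_attainableWelfares_succ {u : Fin (n + 1) → ℕ → ℕ → M} {G : ℕ → M} {v : M}
    (hG : ∀ k ≤ m - t, IsGreatest (attainableWelfares (Fin.tail u) m (t + k)) (G k))
    (hv : IsGreatest {x | ∃ k ≤ m - t, x = u 0 k t + G k} v) :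
    IsGreatest (attainableWelfares u m t) v := by
  obtain ⟨⟨k, hk, rfl⟩, hub⟩ := hv
  constructor
  · exact (mem_attainableWelfares_succ u).2 ⟨k, hk, G k, (hG k hk).1, rfl⟩
  · intro x hx
    obtain ⟨k', hk', y, hy, rfl⟩ := (mem_attainableWelfares_succ u).1 hx
    calc u 0 k' t + y ≤ u 0 k' t + G k' := by gcongr; exact (hG k' hk').2 hy
      _ ≤ u 0 k t + G k := hub ⟨k', hk', rfl⟩

theorem dp_utilitarian_general {u : Fin (n + 1) → ℕ → ℕ → M} {F : Fin (n + 1) → ℕ → M}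
    (hbase : ∀ l ≤ m, F (Fin.last n) l = u (Fin.last n) (m - l) l)
    (hstep : ∀ i : Fin n, ∀ l ≤ m,
      IsGreatest {x | ∃ k ≤ m - l, x = u i.castSucc k l + F i.succ (l + k)} (F i.castSucc l))
    (ht : t ≤ m) :
    IsGreatest (attainableWelfares u m t) (F 0 t) := by
  induction n generalizing t with
  | zero =>
    rw [attainableWelfares_one u ht, ← Fin.last_zero, ← hbase t ht]
    exact isGreatest_singleton
  | succ n ih =>
    refine isGreatest_attainableWelfares_succ (fun k hk => ?_) (hstep 0 t ht)
    exact ih (u := Fin.tail u) (F := Fin.tail F) hbase (fun i => hstep i.succ) (by omega)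

end AttainableWelfares

/-- Dynamic programming for utilitarian social welfare.  Let `u k t` be any function (defined
for `k + t ≤ m`), and let `F` satisfy the base case `F n l = u (m - l) l` and, for
`1 ≤ i < n`, the recurrence making `F i l` the maximum over `k ∈ {0,…,m-l}` of
`u k l + F (i+1) (l+k)`.  Then `F 1 0` is the maximum, over all vectors `(k_1,…,k_n)` of
nonnegative integers summing to `m`, of `∑ i, u (k_i) (k_1 + ⋯ + k_{i-1})`. -/
theorem dp_utilitarian
    (n m : ℕ) (hn : 0 < n) (hm : 0 < m) (u : ℕ → ℕ → ℝ) (F : ℕ → ℕ → ℝ)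
    (hbase : ∀ l ≤ m, F n l = u (m - l) l)
    (hstep : ∀ i l : ℕ, 1 ≤ i → i < n → l ≤ m →
      IsGreatest {x : ℝ | ∃ k ≤ m - l, x = u k l + F (i + 1) (l + k)} (F i l)) :
    IsGreatest {x : ℝ | ∃ k : Fin n → ℕ, (∑ i, k i = m) ∧
      x = ∑ i, u (k i) (∑ j ∈ Finset.Iio i, k j)} (F 1 0) := by
  obtain ⟨d, rfl⟩ := Nat.exists_eq_add_one.mpr hn
  simpa [attainableWelfares, pickingWelfare] using
    dp_utilitarian_general (u := fun _ => u) (F := fun i => F (i + 1)) (t := 0) hbase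
      (fun i l => hstep (i + 1) l (by omega) (by omega)) m.zero_le
end

section
/- Let s = (s_1,…,s_m) be a scoring vector. For integers j, k, t with 1 ≤ j ≤ m, k ≥ 0, t ≥ 0 and k + t ≤ m - j + 1, let g(j,k,t) denote the average, over all t-element subsets S of {j,…,m}, of the sum of s_r over the k smallest elements r of {j,…,m} \ S. Then: (i) g(j,0,t) = 0; (ii) g(j,k,0) = s_j + s_{j+1} + … + s_{j+k-1}; and (iii) for j ≤ m-1, k ≥ 1, t ≥ 1 with k + t ≤ m - j + 1, g(j,k,t) = (1 - t/(m-j+1)) · ( s_j + g(j+1, k-1, t) ) + ( t/(m-j+1) ) · g(j+1, k, t-1). -/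
/-- The `k` smallest elements of a finite set `A` of naturals: the elements of `A` having
fewer than `k` strictly smaller elements inside `A`. -/
def smallestK (A : Finset ℕ) (k : ℕ) : Finset ℕ :=
  A.filter fun x => (A.filter fun y => y < x).card < k

/-- `g m s j k t` is the average, over all `t`-element subsets `S` of `{j,…,m}`, of the sum
of `s r` over the `k` smallest elements `r` of `{j,…,m} \ S`. -/
noncomputable def g (m : ℕ) (s : ℕ → ℝ) (j k t : ℕ) : ℝ :=
  (∑ S ∈ (Finset.Icc j m).powersetCard t,
      ∑ r ∈ smallestK (Finset.Icc j m \ S) k, s r) /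
    (((Finset.Icc j m).powersetCard t).card : ℝ)

/-!
Condition on whether the first item `j` has been picked already, which happens with probability
`p = t / (m - j + 1)`. If it has, the other `t - 1` picks form a uniformly random subset of
`{j + 1, …, m}`, and the agent still takes her `k` best remaining items there. If it has not, she
takes `j` herself, and the `t` picks form a uniformly random `t`-subset of `{j + 1, …, m}`, from
which she takes `k - 1` further items.
-/

open Finset
open scoped BigOperators

section Average

variable {α K : Type*} [DecidableEq α] [Field K] [CharZero K]

theorem sum_powersetCard_succ_insert {M : Type*} [AddCommMonoid M] {a : α} {A : Finset α}
    (ha : a ∉ A) (t : ℕ) (f : Finset α → M) :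
    ∑ S ∈ powersetCard (t + 1) (insert a A), f S =
      ∑ S ∈ powersetCard (t + 1) A, f S + ∑ S ∈ powersetCard t A, f (insert a S) := by
  have notMem_of_mem {u : ℕ} {S : Finset α} (hS : S ∈ powersetCard u A) : a ∉ S :=
    fun haS => ha ((mem_powersetCard.1 hS).1 haS)
  have disjoint_image :
      Disjoint (powersetCard (t + 1) A) ((powersetCard t A).image (insert a)) := by
    refine disjoint_left.2 fun S hS hS' => ?_
    obtain ⟨T, -, rfl⟩ := mem_image.1 hS'
    exact notMem_of_mem hS (mem_insert_self a T)
  have injOn_insert : Set.InjOn (insert a) (powersetCard t A : Set (Finset α)) :=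
    fun S hS T hT hST => by
      rw [← erase_insert (notMem_of_mem hS), hST, erase_insert (notMem_of_mem hT)]
  rw [powersetCard_succ_insert ha, sum_union disjoint_image, sum_image injOn_insert]

theorem cast_choose_eq_div_mul_choose_succ_succ (n t : ℕ) :
    (n.choose t : K) = (t + 1) / (n + 1) * (n + 1).choose (t + 1) := by
  have absorption : ((n : K) + 1) * n.choose t = (n + 1).choose (t + 1) * (t + 1) := by
    exact_mod_cast Nat.add_one_mul_choose_eq n t
  field_simp
  linear_combination absorption

/-- The law of total expectation: `(t + 1) / (#A + 1)` is the probability that a uniformly random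
`(t + 1)`-subset of `insert a A` contains `a`. -/
theorem expect_powersetCard_succ_insert {a : α} {A : Finset α} (ha : a ∉ A) {t : ℕ} (ht : t ≤ #A)
    (f : Finset α → K) :
    𝔼 S ∈ powersetCard (t + 1) (insert a A), f S =
      (1 - (t + 1 : K) / (#A + 1)) * 𝔼 S ∈ powersetCard (t + 1) A, f S +
        (t + 1 : K) / (#A + 1) * 𝔼 S ∈ powersetCard t A, f (insert a S) := by
  have choose_ne_zero : ((#A + 1).choose (t + 1) : K) ≠ 0 :=
    Nat.cast_ne_zero.2 (Nat.choose_ne_zero (by lia))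
  have count_mem := cast_choose_eq_div_mul_choose_succ_succ (K := K) #A t
  have pascal : ((#A + 1).choose (t + 1) : K) = (#A).choose t + (#A).choose (t + 1) := by
    exact_mod_cast Nat.choose_succ_succ' #A t
  have count_notMem : ((#A).choose (t + 1) : K) =
      (1 - (t + 1 : K) / (#A + 1)) * (#A + 1).choose (t + 1) := by
    linear_combination -pascal - count_mem
  have sum_split := sum_powersetCard_succ_insert ha t f
  simp only [← card_mul_expect, card_powersetCard, card_insert_of_notMem ha] at sum_split
  refine mul_left_cancel₀ choose_ne_zero ?_
  rw [sum_split, count_notMem, count_mem]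
  ring

end Average

section SmallestK

theorem smallestK_zero (A : Finset ℕ) : smallestK A 0 = ∅ := by
  simp [smallestK]

theorem smallestK_subset (A : Finset ℕ) (k : ℕ) : smallestK A k ⊆ A :=
  filter_subset _ _

theorem smallestK_insert_succ {A : Finset ℕ} {a : ℕ} (ha : ∀ x ∈ A, a < x) (k : ℕ) :
    smallestK (insert a A) (k + 1) = insert a (smallestK A k) := by
  have ha' : a ∉ A := fun h => lt_irrefl a (ha a h)
  have below_a : {y ∈ insert a A | y < a} = ∅ :=
    filter_eq_empty_iff.2 fun y hy => not_lt.2 <| by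
      obtain rfl | hy := mem_insert.1 hy
      exacts [le_rfl, (ha y hy).le]
  have card_below {x : ℕ} (hx : x ∈ A) : #{y ∈ insert a A | y < x} = #{y ∈ A | y < x} + 1 := by
    rw [filter_insert, if_pos (ha x hx), card_insert_of_notMem (by simp [ha'])]
  rw [smallestK, filter_insert, below_a, if_pos (by simp), smallestK]
  congr 1
  refine filter_congr fun x hx => ?_
  rw [card_below hx, Nat.add_lt_add_iff_right]

theorem sum_smallestK_insert_succ {M : Type*} [AddCommMonoid M] {A : Finset ℕ} {a : ℕ}
    (ha : ∀ x ∈ A, a < x) (k : ℕ) (s : ℕ → M) :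
    ∑ r ∈ smallestK (insert a A) (k + 1), s r = s a + ∑ r ∈ smallestK A k, s r := by
  rw [smallestK_insert_succ ha,
    sum_insert fun h => lt_irrefl a (ha a (smallestK_subset A k h))]

theorem smallestK_Icc {j m k : ℕ} (h : j + k ≤ m + 1) :
    smallestK (Icc j m) k = Ico j (j + k) := by
  have card_below {x : ℕ} (hx : x ≤ m) : #{y ∈ Icc j m | y < x} = x - j := by
    have : {y ∈ Icc j m | y < x} = Ico j x := by
      ext y
      simp only [mem_filter, mem_Icc, mem_Ico]
      lia
    rw [this, Nat.card_Ico]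
  ext x
  simp only [smallestK, mem_filter, mem_Icc, mem_Ico]
  constructor
  · rintro ⟨⟨hj, hx⟩, hc⟩
    rw [card_below hx] at hc
    lia
  · rintro ⟨hj, hx⟩
    rw [card_below (by lia)]
    lia

end SmallestK

section GreedyUtility

variable {K : Type*} [Field K] [CharZero K]

/-- The expected utility of an agent with scores `s` who picks the `k` smallest items of `A` still
available once a uniformly random `t`-subset of `A` is gone. This is `g` with an arbitrary finite
set of items in place of `{j, …, m}`. -/
def expectedGreedyUtility (A : Finset ℕ) (s : ℕ → K) (k t : ℕ) : K :=
  𝔼 S ∈ powersetCard t A, ∑ r ∈ smallestK (A \ S) k, s r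

theorem g_eq_expectedGreedyUtility (m : ℕ) (s : ℕ → ℝ) (j k t : ℕ) :
    g m s j k t = expectedGreedyUtility (Icc j m) s k t :=
  (expect_eq_sum_div_card _ _).symm

theorem expectedGreedyUtility_zero_left (A : Finset ℕ) (s : ℕ → K) (t : ℕ) :
    expectedGreedyUtility A s 0 t = 0 := by
  simp [expectedGreedyUtility, smallestK_zero]

theorem expectedGreedyUtility_zero_right (A : Finset ℕ) (s : ℕ → K) (k : ℕ) :
    expectedGreedyUtility A s k 0 = ∑ r ∈ smallestK A k, s r := by
  simp [expectedGreedyUtility]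

theorem expectedGreedyUtility_insert {A : Finset ℕ} {a : ℕ} (ha : ∀ x ∈ A, a < x) (s : ℕ → K)
    (k : ℕ) {t : ℕ} (ht : t + 1 ≤ #A) :
    expectedGreedyUtility (insert a A) s (k + 1) (t + 1) =
      (1 - (t + 1 : K) / (#A + 1)) * (s a + expectedGreedyUtility A s k (t + 1)) +
        (t + 1 : K) / (#A + 1) * expectedGreedyUtility A s (k + 1) t := by
  have ha' : a ∉ A := fun h => lt_irrefl a (ha a h)
  have a_available : 𝔼 S ∈ powersetCard (t + 1) A,
      ∑ r ∈ smallestK (insert a A \ S) (k + 1), s r =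
        s a + expectedGreedyUtility A s k (t + 1) := by
    rw [expectedGreedyUtility, ← expect_const (powersetCard_nonempty.2 ht) (s a),
      ← expect_add_distrib]
    refine expect_congr rfl fun S hS => ?_
    rw [insert_sdiff_of_notMem _ fun haS => ha' ((mem_powersetCard.1 hS).1 haS)]
    exact sum_smallestK_insert_succ (fun x hx => ha x (sdiff_subset hx)) k s
  have a_taken : 𝔼 S ∈ powersetCard t A,
      ∑ r ∈ smallestK (insert a A \ insert a S) (k + 1), s r =
        expectedGreedyUtility A s (k + 1) t := by
    simp only [insert_sdiff_insert, sdiff_insert_of_notMem ha', expectedGreedyUtility]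
  rw [← a_available, ← a_taken]
  exact expect_powersetCard_succ_insert ha' (by lia) _

theorem g_succ_succ {m j t : ℕ} (h : j + t < m) (s : ℕ → ℝ) (k : ℕ) :
    g m s j (k + 1) (t + 1) =
      (1 - (t + 1 : ℝ) / ((m - j : ℕ) + 1)) * (s j + g m s (j + 1) k (t + 1)) +
        (t + 1 : ℝ) / ((m - j : ℕ) + 1) * g m s (j + 1) (k + 1) t := by
  have card_tail : #(Icc (j + 1) m) = m - j := by simp
  have lt_tail : ∀ x ∈ Icc (j + 1) m, j < x := fun x hx => (mem_Icc.1 hx).1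
  simp only [g_eq_expectedGreedyUtility]
  rw [← insert_Icc_add_one_left_eq_Icc (by lia), ← card_tail]
  exact expectedGreedyUtility_insert lt_tail s k (by lia)

end GreedyUtility

theorem g_recursion_general (m : ℕ) (s : ℕ → ℝ) :
    (∀ j t : ℕ, j + t ≤ m + 1 → g m s j 0 t = 0) ∧
    (∀ j k : ℕ, j + k ≤ m + 1 → g m s j k 0 = ∑ r ∈ Finset.Ico j (j + k), s r) ∧
    (∀ j k t : ℕ, 1 ≤ k → 1 ≤ t → j + t ≤ m →
      g m s j k t =
        (1 - (t : ℝ) / ((m - j + 1 : ℕ) : ℝ)) * (s j + g m s (j + 1) (k - 1) t) +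
          ((t : ℝ) / ((m - j + 1 : ℕ) : ℝ)) * g m s (j + 1) k (t - 1)) := by
  refine ⟨fun j t _ => ?_, fun j k h => ?_, fun j k t hk ht h => ?_⟩
  · rw [g_eq_expectedGreedyUtility, expectedGreedyUtility_zero_left]
  · rw [g_eq_expectedGreedyUtility, expectedGreedyUtility_zero_right, smallestK_Icc h]
  · obtain ⟨k, rfl⟩ := Nat.exists_eq_add_of_le' hk
    obtain ⟨t, rfl⟩ := Nat.exists_eq_add_of_le' ht
    exact_mod_cast g_succ_succ h s k

/-- Recursive formula for the expected greedy-pick utility in the full independence model: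
with `g m s j k t` the average over all `t`-element subsets `S` of `{j,…,m}` of the sum of
`s r` over the `k` smallest elements of `{j,…,m} \ S`, one has (i) `g(j,0,t) = 0`;
(ii) `g(j,k,0) = s_j + ⋯ + s_{j+k-1}`; and (iii) for `j ≤ m-1`, `k ≥ 1`, `t ≥ 1` with
`k + t ≤ m - j + 1`,
`g(j,k,t) = (1 - t/(m-j+1)) (s_j + g(j+1,k-1,t)) + (t/(m-j+1)) g(j+1,k,t-1)`. -/
theorem g_recursion
    (m : ℕ) (hm : 0 < m) (s : ℕ → ℝ)
    (hmono : ∀ i j : ℕ, 1 ≤ i → i ≤ j → j ≤ m → s j ≤ s i)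
    (hnonneg : ∀ j : ℕ, 1 ≤ j → j ≤ m → 0 ≤ s j) :
    (∀ j t : ℕ, 1 ≤ j → j ≤ m → t ≤ m - j + 1 → g m s j 0 t = 0) ∧
    (∀ j k : ℕ, 1 ≤ j → j ≤ m → k ≤ m - j + 1 →
      g m s j k 0 = ∑ r ∈ Finset.Ico j (j + k), s r) ∧
    (∀ j k t : ℕ, 1 ≤ j → j ≤ m - 1 → 1 ≤ k → 1 ≤ t → k + t ≤ m - j + 1 →
      g m s j k t =
        (1 - (t : ℝ) / ((m - j + 1 : ℕ) : ℝ)) * (s j + g m s (j + 1) (k - 1) t) +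
          ((t : ℝ) / ((m - j + 1 : ℕ) : ℝ)) * g m s (j + 1) k (t - 1)) := by
  obtain ⟨zero_picks, zero_taken, recursion⟩ := g_recursion_general m s
  exact ⟨fun j t _ _ _ => zero_picks j t (by lia), fun j k _ _ _ => zero_taken j k (by lia),
    fun j k t _ _ hk ht _ => recursion j k t hk ht (by lia)⟩
end

section
/- Let s = (s_1,…,s_m) be a scoring vector, and for k + t ≤ m let g(k,t) denote the average, over all t-element subsets S of {1,…,m}, of the sum of s_r over the k smallest elements r of {1,…,m} \ S. Then g(k,t) is nondecreasing in k and nonincreasing in t: g(k,t) ≤ g(k+1,t) whenever k+1+t ≤ m, and g(k,t+1) ≤ g(k,t) whenever k+t+1 ≤ m. -/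
/-!
Since `s` is antitone and nonnegative, the `k` smallest elements of `A` have the largest total score
among all subsets of `A` with at most `k` elements. Hence this total, the greedy value, can only
grow when more items are available or more picks are allowed. This gives monotonicity in `k` for
each removed set separately. For `t`, a uniformly random `t`-subset is obtained from a uniformly
random `(t + 1)`-subset by deleting a uniformly random element, and each deletion can only increase
the greedy value of the complement.
-/

open Finset
open scoped BigOperators

section SubsetAverages

variable {ι M : Type*} [AddCommMonoid M] [Module ℚ≥0 M]

theorem expect_sigma_of_card_eq {κ : ι → Type*} {s : Finset ι} {t : ∀ i, Finset (κ i)} {n : ℕ}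
    (ht : ∀ i ∈ s, #(t i) = n) (f : ∀ i, κ i → M) :
    𝔼 p ∈ s.sigma t, f p.1 p.2 = 𝔼 i ∈ s, 𝔼 a ∈ t i, f i a := by
  have hcard : #(s.sigma t) = #s * n := by
    rw [card_sigma, sum_congr rfl ht, sum_const, smul_eq_mul]
  have hfiber : ∀ i ∈ s, 𝔼 a ∈ t i, f i a = (n : ℚ≥0)⁻¹ • ∑ a ∈ t i, f i a := fun i hi => by
    rw [expect, ht i hi]
  rw [expect_congr rfl hfiber, expect, expect, hcard, sum_sigma, ← smul_sum, smul_smul,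
    Nat.cast_mul, mul_inv]

-- Both sides average over the pairs `(S, T)` with `S ⊂ T ⊆ U`, `#S = t` and `#T = t + 1`.
theorem expect_powersetCard_succ_expect_erase [DecidableEq ι] {U : Finset ι} {t : ℕ} (ht : t < #U)
    (f : Finset ι → M) :
    𝔼 T ∈ U.powersetCard (t + 1), 𝔼 x ∈ T, f (T.erase x) = 𝔼 S ∈ U.powersetCard t, f S := by
  have hcard : ∀ S ∈ U.powersetCard t, #(U \ S) = #U - t := fun S hS => by
    rw [card_sdiff_of_subset (mem_powersetCard.1 hS).1, (mem_powersetCard.1 hS).2]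
  calc 𝔼 T ∈ U.powersetCard (t + 1), 𝔼 x ∈ T, f (T.erase x)
      = 𝔼 p ∈ (U.powersetCard (t + 1)).sigma fun T => T, f (p.1.erase p.2) :=
        (expect_sigma_of_card_eq (fun T hT => (mem_powersetCard.1 hT).2)
          fun T x => f (T.erase x)).symm
    _ = 𝔼 p ∈ (U.powersetCard t).sigma fun S => U \ S, f p.1 := by
        refine expect_nbij' (fun p => ⟨p.1.erase p.2, p.2⟩) (fun p => ⟨insert p.2 p.1, p.2⟩)
          ?_ ?_ ?_ ?_ fun _ _ => rfl <;>
        grind [insert_erase, erase_insert]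
    _ = 𝔼 S ∈ U.powersetCard t, 𝔼 _x ∈ U \ S, f S := expect_sigma_of_card_eq hcard fun S _ => f S
    _ = 𝔼 S ∈ U.powersetCard t, f S := by
        refine expect_congr rfl fun S hS => expect_const (card_pos.1 ?_) _
        rw [hcard S hS]
        exact Nat.sub_pos_of_lt ht

theorem antitoneOn_expect_powersetCard [PartialOrder M] [IsOrderedAddMonoid M]
    [PosSMulMono ℚ≥0 M] {U : Finset ι} {f : Finset ι → M} (hf : AntitoneOn f U.powerset) :
    AntitoneOn (fun t => 𝔼 S ∈ U.powersetCard t, f S) (Set.Iic #U) := by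
  classical
  refine antitoneOn_of_add_one_le Set.ordConnected_Iic fun t _ _ ht => ?_
  calc 𝔼 T ∈ U.powersetCard (t + 1), f T
      ≤ 𝔼 T ∈ U.powersetCard (t + 1), 𝔼 x ∈ T, f (T.erase x) := by
        refine expect_le_expect fun T hT => ?_
        obtain ⟨hTU, hTcard⟩ := mem_powersetCard.1 hT
        refine le_expect (card_pos.1 (by omega)) fun x _ => ?_
        have hle := erase_subset x T
        exact hf (mem_powerset.2 (hle.trans hTU)) (mem_powerset.2 hTU) hle
    _ = 𝔼 S ∈ U.powersetCard t, f S := expect_powersetCard_succ_expect_erase ht f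

end SubsetAverages

theorem sum_le_sum_of_card_le_of_forall_le {ι M : Type*} [AddCommMonoid M] [PartialOrder M]
    [IsOrderedAddMonoid M] {f : ι → M} {B C : Finset ι} (hcard : #B ≤ #C)
    (hle : ∀ b ∈ B, ∀ c ∈ C, f b ≤ f c) (hnonneg : ∀ c ∈ C, 0 ≤ f c) :
    ∑ b ∈ B, f b ≤ ∑ c ∈ C, f c := by
  obtain ⟨e⟩ : Nonempty (B ↪ C) := Function.Embedding.nonempty_of_card_le (by simpa using hcard)
  calc ∑ b ∈ B, f b = ∑ b : B, f b := (sum_coe_sort B f).symm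
    _ ≤ ∑ b : B, f (e b) := sum_le_sum fun b _ => hle b b.2 (e b) (e b).2
    _ = ∑ c ∈ univ.map e, f c := (sum_map univ e fun c => f c).symm
    _ ≤ ∑ c : C, f c := sum_le_univ_sum_of_nonneg fun c => hnonneg c c.2
    _ = ∑ c ∈ C, f c := sum_coe_sort C f

section Rank

variable {α : Type*}

theorem strictMonoOn_card_filter_lt [Preorder α] [DecidableLT α] (A : Finset α) :
    StrictMonoOn (fun x => #{y ∈ A | y < x}) A := by
  intro x hx y _ hxy
  refine card_lt_card (ssubset_iff_of_subset ?_ |>.2 ⟨x, ?_, ?_⟩)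
  · exact monotone_filter_right A fun _ _ hz => hz.trans hxy
  · exact mem_filter.2 ⟨hx, hxy⟩
  · simp

theorem image_card_filter_lt [LinearOrder α] (A : Finset α) :
    A.image (fun x => #{y ∈ A | y < x}) = range #A := by
  refine eq_of_subset_of_card_le (image_subset_iff.2 fun x hx => ?_) ?_
  · exact mem_range.2 (card_lt_card (filter_ssubset.2 ⟨x, hx, lt_irrefl x⟩))
  · rw [card_range, card_image_of_injOn (strictMonoOn_card_filter_lt A).injOn]

end Rank

theorem card_smallestK (A : Finset ℕ) (k : ℕ) : #(smallestK A k) = min #A k := by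
  have hinj := (strictMonoOn_card_filter_lt A).injOn.mono (smallestK_subset A k)
  have himage : (smallestK A k).image (fun x => #{y ∈ A | y < x}) = range (min #A k) := by
    rw [smallestK, ← filter_image (p := (· < k)), image_card_filter_lt]
    ext i
    simp
  rw [← card_image_of_injOn hinj, himage, card_range]

theorem lt_of_mem_smallestK_of_notMem {A : Finset ℕ} {k x y : ℕ} (hx : x ∈ smallestK A k)
    (hyA : y ∈ A) (hy : y ∉ smallestK A k) : x < y := by
  obtain ⟨hxA, hxk⟩ := mem_filter.1 hx
  have hky : k ≤ #{z ∈ A | z < y} := not_lt.1 fun h => hy (mem_filter.2 ⟨hyA, h⟩)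
  exact ((strictMonoOn_card_filter_lt A).lt_iff_lt hxA hyA).1 (hxk.trans_le hky)

section Greedy

variable {M : Type*} [AddCommMonoid M] [PartialOrder M] [IsOrderedCancelAddMonoid M]
  {s : ℕ → M} {A B : Finset ℕ} {k l : ℕ}

theorem sum_le_sum_smallestK (hs : AntitoneOn s A) (hnonneg : ∀ r ∈ A, 0 ≤ s r) (hBA : B ⊆ A)
    (hBk : #B ≤ k) : ∑ r ∈ B, s r ≤ ∑ r ∈ smallestK A k, s r := by
  have hcard : #B ≤ #(smallestK A k) := card_smallestK A k ▸ le_min (card_le_card hBA) hBk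
  refine sum_sdiff_le_sum_sdiff.1 (sum_le_sum_of_card_le_of_forall_le ?_ ?_ ?_)
  · exact card_sdiff_le_card_sdiff_iff.2 hcard
  · intro b hb c hc
    obtain ⟨hbB, hbK⟩ := mem_sdiff.1 hb
    have hcK := (mem_sdiff.1 hc).1
    exact hs (smallestK_subset A k hcK) (hBA hbB)
      (lt_of_mem_smallestK_of_notMem hcK (hBA hbB) hbK).le
  · exact fun c hc => hnonneg c (smallestK_subset A k (mem_sdiff.1 hc).1)

theorem sum_smallestK_le_sum_smallestK (hs : AntitoneOn s A) (hnonneg : ∀ r ∈ A, 0 ≤ s r)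
    (hBA : B ⊆ A) (hlk : l ≤ k) :
    ∑ r ∈ smallestK B l, s r ≤ ∑ r ∈ smallestK A k, s r := by
  refine sum_le_sum_smallestK hs hnonneg ((smallestK_subset B l).trans hBA) ?_
  exact card_smallestK B l ▸ (min_le_right _ _).trans hlk

end Greedy

theorem g_eq_expect (m : ℕ) (s : ℕ → ℝ) (j k t : ℕ) :
    g m s j k t =
      𝔼 S ∈ (Icc j m).powersetCard t, ∑ r ∈ smallestK (Icc j m \ S) k, s r :=
  (expect_eq_sum_div_card _ _).symm

theorem g_monotone_general {m j : ℕ} {s : ℕ → ℝ} (hs : AntitoneOn s (Icc j m))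
    (hnonneg : ∀ r ∈ Icc j m, 0 ≤ s r) {k l t u : ℕ} (hkl : k ≤ l) (htu : t ≤ u)
    (hu : u ≤ #(Icc j m)) : g m s j k u ≤ g m s j l t := by
  have hgreedy {S T : Finset ℕ} (hST : S ⊆ T) {p q : ℕ} (hpq : p ≤ q) :
      ∑ r ∈ smallestK (Icc j m \ T) p, s r ≤ ∑ r ∈ smallestK (Icc j m \ S) q, s r :=
    sum_smallestK_le_sum_smallestK (hs.mono (coe_subset.2 sdiff_subset))
      (fun r hr => hnonneg r (sdiff_subset hr)) (sdiff_subset_sdiff le_rfl hST) hpq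
  simp only [g_eq_expect]
  calc 𝔼 S ∈ (Icc j m).powersetCard u, ∑ r ∈ smallestK (Icc j m \ S) k, s r
      ≤ 𝔼 S ∈ (Icc j m).powersetCard t, ∑ r ∈ smallestK (Icc j m \ S) k, s r :=
        antitoneOn_expect_powersetCard (fun _ _ _ _ hST => hgreedy hST le_rfl)
          (htu.trans hu) hu htu
    _ ≤ 𝔼 S ∈ (Icc j m).powersetCard t, ∑ r ∈ smallestK (Icc j m \ S) l, s r :=
        expect_le_expect fun _ _ => hgreedy subset_rfl hkl

/-- Monotonicity of the expected greedy-pick utility in the full independence model: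
with `g m s 1 k t` the average over all `t`-element subsets `S` of `{1,…,m}` of the sum of
`s r` over the `k` smallest elements of `{1,…,m} \ S`, the quantity `g m s 1 k t` is
nondecreasing in `k` and nonincreasing in `t` on the domain `k + t ≤ m`. -/
theorem g_monotone
    (m : ℕ) (hm : 0 < m) (s : ℕ → ℝ)
    (hmono : ∀ i j : ℕ, 1 ≤ i → i ≤ j → j ≤ m → s j ≤ s i)
    (hnonneg : ∀ j : ℕ, 1 ≤ j → j ≤ m → 0 ≤ s j) :
    (∀ k t : ℕ, k + 1 + t ≤ m → g m s 1 k t ≤ g m s 1 (k + 1) t) ∧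
    (∀ k t : ℕ, k + t + 1 ≤ m → g m s 1 k (t + 1) ≤ g m s 1 k t) := by
  have hs : AntitoneOn s (Icc 1 m) := fun i hi j hj hij =>
    hmono i j (mem_Icc.1 hi).1 hij (mem_Icc.1 hj).2
  have hs_nonneg : ∀ r ∈ Icc 1 m, 0 ≤ s r := fun r hr =>
    hnonneg r (mem_Icc.1 hr).1 (mem_Icc.1 hr).2
  exact ⟨fun k t hkt => g_monotone_general hs hs_nonneg k.le_succ le_rfl (by simp; omega),
    fun k t hkt => g_monotone_general hs hs_nonneg le_rfl t.le_succ (by simp; omega)⟩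
end

section
/- Let r agents have rankings over the item set {1,…,m} that are independent and uniformly distributed over all m! rankings, and let them pick greedily in turn, agent i picking her k_i most preferred remaining items, with t = k_1 + … + k_r ≤ m. Then the random set consisting of all t picked items is uniformly distributed over the t-element subsets of {1,…,m}. -/
/-- The `k` most preferred items of `S` under the ranking `σ` (where `σ r` is the item of
0-based rank `r`, so `σ.symm x` is the rank of item `x`): the items of `S` having fewer
than `k` strictly better items inside `S`. -/
def topk {m : ℕ} (σ : Fin m ≃ Fin m) (S : Finset (Fin m)) (k : ℕ) : Finset (Fin m) :=
  S.filter fun x => (S.filter fun y => σ.symm y < σ.symm x).card < k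

/-- Items remaining before the `i`-th agent (0-based) picks, under profile `P` (agent `i`
has ranking `P i`) and pick-count vector `k` (agent `i` picks `k i` items). -/
def remaining {m : ℕ} (P : ℕ → Fin m ≃ Fin m) (k : ℕ → ℕ) : ℕ → Finset (Fin m)
  | 0 => Finset.univ
  | i + 1 => remaining P k i \ topk (P i) (remaining P k i) (k i)

/-- The set of items greedily picked by the `i`-th agent (0-based). -/
def alloc {m : ℕ} (P : ℕ → Fin m ≃ Fin m) (k : ℕ → ℕ) (i : ℕ) : Finset (Fin m) :=
  topk (P i) (remaining P k i) (k i)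

/-- The utility of the `i`-th agent (0-based): the sum of the scores `s r` over the
1-based ranks `r` (in her own ranking) of the items she receives. -/
noncomputable def util {m : ℕ} (s : ℕ → ℝ) (P : ℕ → Fin m ≃ Fin m) (k : ℕ → ℕ)
    (i : ℕ) : ℝ :=
  ∑ x ∈ alloc P k i, s (((P i).symm x : ℕ) + 1)

/-- Extend a profile on `Fin r` to a profile indexed by `ℕ` (agents `≥ r` are irrelevant). -/
def extendProfile {m : ℕ} (r : ℕ) (Q : Fin r → Fin m ≃ Fin m) : ℕ → Fin m ≃ Fin m :=
  fun i => if h : i < r then Q ⟨i, h⟩ else Equiv.refl _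

/-!
Relabelling the items by a permutation acts on profiles, and greedy picking commutes with this
action. Since permutations act transitively on the `t`-element sets, the profiles leading to one
`t`-set are carried bijectively onto those leading to any other, and a law of the profile that is
invariant under relabelling gives all `t`-sets the same weight.
-/

open Equiv Finset MulAction
open scoped Pointwise

section EquivariantFibers

variable {G X Y M : Type*} [Group G] [MulAction G X] [Fintype X] [MulAction G Y] [DecidableEq Y]
  [AddCommMonoid M]

theorem sum_fiber_smul_eq (f : X →[G] Y) {w : X → M} (hw : ∀ (g : G) x, w (g • x) = w x)
    (g : G) (y : Y) : ∑ x with f x = g • y, w x = ∑ x with f x = y, w x := by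
  refine (sum_equiv (MulAction.toPerm g) (fun x ↦ ?_) fun x _ ↦ (hw g x).symm).symm
  simp

theorem card_smul_sum_fiber_eq_sum [Finite Y] [IsPretransitive G Y] (f : X →[G] Y) {w : X → M}
    (hw : ∀ (g : G) x, w (g • x) = w x) (y : Y) :
    Nat.card Y • ∑ x with f x = y, w x = ∑ x, w x := by
  have := Fintype.ofFinite Y
  have fiber_eq (z : Y) : ∑ x with f x = z, w x = ∑ x with f x = y, w x := by
    obtain ⟨g, rfl⟩ := exists_smul_eq G y z
    exact sum_fiber_smul_eq f hw g y
  rw [← sum_fiberwise univ f w, sum_congr rfl fun z _ ↦ fiber_eq z, sum_const, card_univ,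
    Nat.card_eq_fintype_card]

end EquivariantFibers

section RankWithin

variable {α β : Type*} [LinearOrder β] {f : α → β} {S : Finset α}

theorem card_filter_lt_lt_card_filter_lt {x z : α} (hx : x ∈ S) (hxz : f x < f z) :
    #{y ∈ S | f y < f x} < #{y ∈ S | f y < f z} := by
  refine card_lt_card <| ssubset_iff_of_subset ?_ |>.2 ⟨x, by simp [hx, hxz]⟩
  exact monotone_filter_right S fun y _ hy ↦ hy.trans hxz

theorem injOn_card_filter_lt (hf : Set.InjOn f S) :
    Set.InjOn (fun x ↦ #{y ∈ S | f y < f x}) S := by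
  intro x hx z hz hxz
  refine hf hx hz (le_antisymm (not_lt.1 fun h ↦ ?_) (not_lt.1 fun h ↦ ?_))
  · exact (card_filter_lt_lt_card_filter_lt hz h).ne' hxz
  · exact (card_filter_lt_lt_card_filter_lt hx h).ne hxz

theorem image_card_filter_lt_s12 (hf : Set.InjOn f S) :
    S.image (fun x ↦ #{y ∈ S | f y < f x}) = range #S := by
  refine eq_of_subset_of_card_le (image_subset_iff.2 fun x hx ↦ mem_range.2 ?_) ?_
  · exact card_lt_card (filter_ssubset.2 ⟨x, hx, lt_irrefl _⟩)
  · rw [card_range, card_image_of_injOn (injOn_card_filter_lt hf)]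

theorem card_filter_card_filter_lt_lt (hf : Set.InjOn f S) (k : ℕ) :
    #{x ∈ S | #{y ∈ S | f y < f x} < k} = min #S k := by
  have hinj : Set.InjOn (fun x ↦ #{y ∈ S | f y < f x}) ↑{x ∈ S | #{y ∈ S | f y < f x} < k} :=
    (injOn_card_filter_lt hf).mono (coe_subset.2 (filter_subset _ S))
  rw [← card_image_of_injOn hinj, ← filter_image (p := (· < k)), image_card_filter_lt_s12 hf]
  have filter_range : {n ∈ range #S | n < k} = range (min #S k) := by ext; simp
  rw [filter_range, card_range]

end RankWithin

variable {m : ℕ}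

theorem topk_subset (σ : Perm (Fin m)) (S : Finset (Fin m)) (k : ℕ) : topk σ S k ⊆ S :=
  filter_subset _ S

theorem card_topk (σ : Perm (Fin m)) (S : Finset (Fin m)) (k : ℕ) :
    #(topk σ S k) = min #S k :=
  card_filter_card_filter_lt_lt σ.symm.injective.injOn k

theorem card_remaining (P : ℕ → Perm (Fin m)) (k : ℕ → ℕ) (i : ℕ) :
    #(remaining P k i) = m - ∑ j ∈ range i, k j := by
  induction i with
  | zero => simp [remaining]
  | succ i ih =>
    rw [remaining, card_sdiff_of_subset (topk_subset _ _ _), card_topk, ih, sum_range_succ]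
    lia

-- `π • σ = π * σ` is the ranking `σ` after each item `x` has been renamed `π x`.
theorem topk_smul (π σ : Perm (Fin m)) (S : Finset (Fin m)) (k : ℕ) :
    topk (π • σ) (π • S) k = π • topk σ S k := by
  have rank_smul (x : Fin m) : (π • σ).symm (π x) = σ.symm x := by
    simp [Perm.mul_def]
  simp only [topk, smul_finset_def, Perm.smul_def, filter_image, rank_smul,
    card_image_of_injective _ π.injective]

theorem remaining_smul (π : Perm (Fin m)) (P : ℕ → Perm (Fin m)) (k : ℕ → ℕ) (i : ℕ) :
    remaining (π • P) k i = π • remaining P k i := by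
  induction i with
  | zero => simp [remaining]
  | succ i ih => rw [remaining, ih, Pi.smul_apply, topk_smul, ← smul_finset_sdiff, remaining]

theorem remaining_congr {P P' : ℕ → Perm (Fin m)} (k : ℕ → ℕ) {i : ℕ}
    (h : ∀ j < i, P j = P' j) : remaining P k i = remaining P' k i := by
  induction i with
  | zero => rfl
  | succ i ih =>
    rw [remaining, remaining, ih fun j hj ↦ h j (hj.trans i.lt_succ_self), h i i.lt_succ_self]

variable {r : ℕ}

/-- The set of all items picked by the `r` agents with profile `Q`, agent `i` (0-based) picking her
`k i` most preferred items among those left by agents `0, …, i - 1`. -/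
def pickedSet (k : ℕ → ℕ) (Q : Fin r → Perm (Fin m)) : Finset (Fin m) :=
  univ \ remaining (extendProfile r Q) k r

theorem pickedSet_smul (k : ℕ → ℕ) (π : Perm (Fin m)) (Q : Fin r → Perm (Fin m)) :
    pickedSet k (π • Q) = π • pickedSet k Q := by
  have extend_smul : ∀ i < r, extendProfile r (π • Q) i = (π • extendProfile r Q) i := by
    intro i hi
    simp [extendProfile, hi]
  rw [pickedSet, remaining_congr k extend_smul, remaining_smul, pickedSet, smul_finset_sdiff,
    smul_finset_univ]

theorem card_pickedSet (k : ℕ → ℕ) (Q : Fin r → Perm (Fin m)) :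
    #(pickedSet k Q) = min m (∑ i ∈ range r, k i) := by
  rw [pickedSet, card_univ_sdiff, card_remaining, Fintype.card_fin]
  lia

-- `w` is the unnormalised law of the profile.
theorem fi_picked_set_uniform_general {M : Type*} [AddCommMonoid M] (k : ℕ → ℕ)
    {w : (Fin r → Fin m ≃ Fin m) → M} (hw : ∀ (π : Perm (Fin m)) Q, w (π • Q) = w Q)
    {T : Finset (Fin m)} (hT : #T = ∑ i ∈ range r, k i) :
    m.choose #T • ∑ Q with pickedSet k Q = T, w Q = ∑ Q, w Q := by
  have card_pickedSet_eq (Q : Fin r → Fin m ≃ Fin m) : #(pickedSet k Q) = #T := by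
    rw [card_pickedSet, ← hT, min_eq_right (card_finset_fin_le T)]
  let picked : (Fin r → Fin m ≃ Fin m) →[Perm (Fin m)] Set.powersetCard (Fin m) #T :=
    { toFun Q := ⟨pickedSet k Q, card_pickedSet_eq Q⟩
      map_smul' π Q := Subtype.ext (pickedSet_smul k π Q) }
  have := Set.powersetCard.isPretransitive (α := Fin m) (n := #T)
  have picked_eq_iff (Q : Fin r → Fin m ≃ Fin m) : picked Q = ⟨T, rfl⟩ ↔ pickedSet k Q = T :=
    Subtype.ext_iff
  have key := card_smul_sum_fiber_eq_sum picked hw ⟨T, rfl⟩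
  rw [Set.powersetCard.card, Nat.card_fin] at key
  convert key using 4
  exact (picked_eq_iff _).symm

/-- In the full independence model, if `r` agents with independent uniformly random rankings
pick greedily in turn (agent `i` picking her `k i` most preferred remaining items), with
`t = k_1 + ⋯ + k_r ≤ m`, then the set of all `t` picked items is uniformly distributed over
the `t`-element subsets of the `m` items: for every `t`-subset `T`, the number of profiles
whose picked set is `T`, times the number `C(m,t)` of `t`-subsets, equals the total number
of profiles. -/
theorem fi_picked_set_uniform
    (r m : ℕ) (k : ℕ → ℕ) (t : ℕ) (ht : ∑ i ∈ Finset.range r, k i = t) (htm : t ≤ m) :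
    ∀ T : Finset (Fin m), T.card = t →
      Nat.card {Q : Fin r → Fin m ≃ Fin m //
          Finset.univ \ remaining (extendProfile r Q) k r = T} * m.choose t =
        Fintype.card (Fin r → Fin m ≃ Fin m) := by
  intro T hT
  change Nat.card {Q : Fin r → Fin m ≃ Fin m // pickedSet k Q = T} * _ = _
  simpa [hT, Fintype.card_subtype, mul_comm] using
    fi_picked_set_uniform_general k (w := fun _ ↦ (1 : ℕ)) (fun _ _ ↦ rfl) (hT.trans ht.symm)
end
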